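/- In the multinomial assignment setting, let c > 0 and suppose m(n)·n^{-2}/log n → c as n → ∞. Let H* = H*(c) be the unique real number H > 1 satisfying H log H − (H − 1) = 1/c. Then E[max_{σ ∈ S_n} Σ_{i=1}^n X_{iσ(i)}] = c·H*·n·log n·(1+o(1)); that is, E[max_σ Σ_i X_{iσ(i)}]/(c·H*·n·log n) → 1 as n → ∞. -/

import Mathlib

open MeasureTheory Filter Real

noncomputable section

/-- The uniform measure on the `n × n` grid of cells. -/
def cellMeasure (n : ℕ) : Measure (Fin n × Fin n) :=
  ((n : ENNReal) ^ 2)⁻¹ • Measure.count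

/-- The law of `m` i.i.d. points, each uniformly distributed on the `n × n` grid;
under this measure the matrix of cell counts is multinomial `M(m, n²)`. -/
def gridMeasure (m n : ℕ) : Measure (Fin m → Fin n × Fin n) :=
  Measure.pi fun _ => cellMeasure n

/-- `X_{ij}`: the number of the `m` points falling in cell `(i, j)`. -/
def cellCount {m n : ℕ} (i j : Fin n) (ω : Fin m → Fin n × Fin n) : ℕ :=
  (Finset.univ.filter fun k => ω k = (i, j)).card

/-- The assignment sum `S(σ) = ∑ i, X_{i σ(i)}`. -/
def assignSum {m n : ℕ} (σ : Equiv.Perm (Fin n)) (ω : Fin m → Fin n × Fin n) : ℝ :=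
  ∑ i, (cellCount i (σ i) ω : ℝ)

/-- `max_{σ ∈ S_n} S(σ)`. -/
def maxAssign {m n : ℕ} (ω : Fin m → Fin n × Fin n) : ℝ :=
  ⨆ σ : Equiv.Perm (Fin n), assignSum σ ω

/-- `min_{σ ∈ S_n} S(σ)`. -/
def minAssign {m n : ℕ} (ω : Fin m → Fin n × Fin n) : ℝ :=
  ⨅ σ : Equiv.Perm (Fin n), assignSum σ ω

/-- `E[max_{σ ∈ S_n} S(σ)]`. -/
def EmaxAssign (m n : ℕ) : ℝ :=
  ∫ ω, maxAssign ω ∂(gridMeasure m n)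

/-- `E[min_{σ ∈ S_n} S(σ)]`. -/
def EminAssign (m n : ℕ) : ℝ :=
  ∫ ω, minAssign ω ∂(gridMeasure m n)


lemma aux_egf {α : Type*} [Fintype α] [DecidableEq α] (m : ℕ) (g : α → ℕ → ℝ)
    (hg : ∀ c k, 0 ≤ g c k) (z : ℝ) (hz : 0 ≤ z) :
    z ^ m * ∑ f : Fin m → α, ∏ c, g c (Finset.univ.filter fun k => f k = c).card
      ≤ (m.factorial : ℝ) * ∏ c, ∑ k ∈ Finset.range (m + 1), g c k * (z ^ k / (k.factorial : ℝ)) := by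
  classical
  have key : ∑ f : Fin m → α, ∏ c, g c (Finset.univ.filter fun k => f k = c).card
      = ∑ k ∈ Finset.piAntidiag (Finset.univ : Finset α) m,
        (Nat.multinomial Finset.univ k : ℝ) * ∏ c, g c (k c) := by
    let L := (MvPolynomial.basisMonomials α ℝ).constr ℝ (fun s : α →₀ ℕ => ∏ c, g c (s c))
    have hL : ∀ s : α →₀ ℕ, L (MvPolynomial.monomial s 1) = ∏ c, g c (s c) := by
      intro s
      have := (MvPolynomial.basisMonomials α ℝ).constr_basis ℝ (fun s : α →₀ ℕ => ∏ c, g c (s c)) s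
      simpa [L] using this
    have h1 := Fintype.sum_pow (fun a : α => (MvPolynomial.X a : MvPolynomial α ℝ)) m
    have h2 := Finset.sum_pow_eq_sum_piAntidiag (Finset.univ : Finset α)
      (fun a : α => (MvPolynomial.X a : MvPolynomial α ℝ)) m
    have h3 := congrArg L (h1.symm.trans h2)
    rw [map_sum, map_sum] at h3
    have e1 : ∀ f : Fin m → α, L (∏ i, MvPolynomial.X (f i)) =
        ∏ c, g c (Finset.univ.filter fun k => f k = c).card := by
      intro f
      have : (∏ i, MvPolynomial.X (f i) : MvPolynomial α ℝ)
          = MvPolynomial.monomial (∑ i, Finsupp.single (f i) 1) 1 := by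
        rw [MvPolynomial.monomial_sum_one]; rfl
      rw [this, hL]
      refine Finset.prod_congr rfl fun c _ => ?_
      congr 1
      rw [Finsupp.finsetSum_apply, Finset.card_filter]
      refine Finset.sum_congr rfl fun i _ => ?_
      rw [Finsupp.single_apply]
    have e2 : ∀ k : α → ℕ, L ((Nat.multinomial Finset.univ k : MvPolynomial α ℝ) *
        ∏ c, MvPolynomial.X c ^ k c) = (Nat.multinomial Finset.univ k : ℝ) * ∏ c, g c (k c) := by
      intro k
      have : (∏ c, MvPolynomial.X c ^ k c : MvPolynomial α ℝ)
          = MvPolynomial.monomial (Finsupp.equivFunOnFinite.symm k) 1 := by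
        rw [MvPolynomial.monomial_eq, Finsupp.prod_fintype _ _ (by simp)]
        simp
      rw [this, ← nsmul_eq_mul, map_nsmul, hL, nsmul_eq_mul]
      simp
    simp only [e1, e2] at h3
    exact h3
  rw [key, Finset.prod_univ_sum, Finset.mul_sum, Finset.mul_sum]
  have hsub : Finset.piAntidiag (Finset.univ : Finset α) m ⊆
      Fintype.piFinset fun _ : α => Finset.range (m + 1) := by
    intro k hk
    rw [Finset.mem_piAntidiag] at hk
    rw [Fintype.mem_piFinset]
    intro a
    rw [Finset.mem_range, Nat.lt_succ_iff, ← hk.1]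
    exact Finset.single_le_sum (f := k) (fun _ _ => Nat.zero_le _) (Finset.mem_univ a)
  refine le_trans (le_of_eq ?_) (Finset.sum_le_sum_of_subset_of_nonneg hsub ?_)
  · refine Finset.sum_congr rfl fun k hk => ?_
    rw [Finset.mem_piAntidiag] at hk
    have hs := Nat.multinomial_spec (Finset.univ : Finset α) k
    rw [hk.1] at hs
    rw [← hs, Finset.prod_mul_distrib, Finset.prod_div_distrib, Finset.prod_pow_eq_pow_sum, hk.1]
    push_cast
    have : (∏ i, ((k i).factorial : ℝ)) ≠ 0 := by
      refine Finset.prod_ne_zero_iff.2 fun i _ => ?_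
      exact_mod_cast (k i).factorial_ne_zero
    field_simp
  · intro k _ _
    refine mul_nonneg (by positivity) (Finset.prod_nonneg fun c _ => ?_)
    exact mul_nonneg (hg _ _) (by positivity)

lemma aux_stir (m : ℕ) (hm : 1 ≤ m) :
    (m.factorial : ℝ) * Real.exp m ≤ Real.exp 1 * m * (m : ℝ) ^ m := by
  induction m, hm using Nat.le_induction with
  | base => simp
  | succ m hm ih =>
    have hm0 : (0 : ℝ) < m := by exact_mod_cast hm
    have h1 : Real.exp 1 * (m : ℝ) ^ (m + 1) ≤ ((m : ℝ) + 1) ^ (m + 1) := by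
      have hl := Real.one_sub_inv_le_log_of_pos (x := (m + 1 : ℝ) / m) (by positivity)
      have : 1 - ((m + 1 : ℝ) / m)⁻¹ = 1 / (m + 1) := by field_simp; ring
      rw [this] at hl
      have h2 : (1 : ℝ) ≤ (m + 1 : ℕ) * Real.log ((m + 1 : ℝ) / m) := by
        push_cast
        rw [div_le_iff₀ (by positivity)] at hl
        linarith
      rw [← Real.log_pow] at h2
      have h3 := Real.exp_le_exp.2 h2
      rw [Real.exp_log (by positivity), div_pow, le_div_iff₀ (by positivity)] at h3
      exact h3
    rw [Nat.factorial_succ]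
    push_cast
    rw [Real.exp_add]
    calc ((m : ℝ) + 1) * m.factorial * (Real.exp m * Real.exp 1)
        = (m + 1) * Real.exp 1 * (m.factorial * Real.exp m) := by ring
      _ ≤ (m + 1) * Real.exp 1 * (Real.exp 1 * m * (m : ℝ) ^ m) := by gcongr
      _ = (m + 1) * Real.exp 1 * (Real.exp 1 * (m : ℝ) ^ (m + 1)) := by ring
      _ ≤ (m + 1) * Real.exp 1 * ((m : ℝ) + 1) ^ (m + 1) := by gcongr
      _ = _ := by ring

lemma aux_swap {n : ℕ} (good : Fin n → Fin n → Prop) :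
    ∃ σ : Equiv.Perm (Fin n), ∀ i i', ¬ good i (σ i) → ¬ good i' (σ i') → ¬ good i (σ i') := by
  classical
  obtain ⟨σ, -, hσ⟩ := Finset.exists_max_image (Finset.univ : Finset (Equiv.Perm (Fin n)))
    (fun σ => (Finset.univ.filter fun i => good i (σ i)).card) ⟨1, Finset.mem_univ _⟩
  refine ⟨σ, fun i i' hi hi' hg => ?_⟩
  have hne : i ≠ i' := by rintro rfl; exact hi hg
  have := hσ (σ * Equiv.swap i i') (Finset.mem_univ _)
  refine absurd this (not_le.2 (Finset.card_lt_card ?_))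
  rw [Finset.ssubset_iff_of_subset]
  · exact ⟨i, Finset.mem_filter.2 ⟨Finset.mem_univ _, by simpa using hg⟩, by simp [hi]⟩
  · intro j hj
    simp only [Finset.mem_filter, Finset.mem_univ, true_and] at hj ⊢
    have h1 : j ≠ i := by rintro rfl; exact hi hj
    have h2 : j ≠ i' := by rintro rfl; exact hi' hj
    simpa [Equiv.swap_apply_of_ne_of_ne h1 h2] using hj

/-- count bound -/
lemma aux_count {α : Type*} [Fintype α] [DecidableEq α] (m T : ℕ) (hm : 1 ≤ m)
    (C : Finset α) (mu : ℝ) (hmu : mu * Fintype.card α = m) (hmu0 : 0 < mu) :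
    ((Finset.univ.filter fun f : Fin m → α =>
      ∀ c ∈ C, (Finset.univ.filter fun k => f k = c).card < T).card : ℝ)
    ≤ (Fintype.card α : ℝ) ^ m * (Real.exp 1 * m *
        Real.exp (-(Real.exp (-mu) * mu ^ T / T.factorial) * C.card)) := by
  set p := Real.exp (-mu) * mu ^ T / T.factorial with hp
  set N := (Finset.univ.filter fun f : Fin m → α =>
      ∀ c ∈ C, (Finset.univ.filter fun k => f k = c).card < T).card with hN
  let g : α → ℕ → ℝ := fun c k => if c ∈ C then (if k < T then 1 else 0) else 1
  have h := aux_egf m g (by intro c k; simp only [g]; split_ifs <;> norm_num) mu hmu0.le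
  have hNs : (N : ℝ) = ∑ f : Fin m → α, ∏ c, g c (Finset.univ.filter fun k => f k = c).card := by
    rw [hN, Finset.card_filter]
    push_cast
    refine Finset.sum_congr rfl fun f _ => ?_
    split_ifs with hf
    · symm
      refine Finset.prod_eq_one fun c _ => ?_
      simp only [g]
      split_ifs with h1 h2
      · rfl
      · exact absurd (hf c h1) h2
      · rfl
    · push Not at hf
      obtain ⟨c, hc, hcT⟩ := hf
      symm
      refine Finset.prod_eq_zero (Finset.mem_univ c) ?_
      simp [g, hc, not_lt.2 hcT]
  rw [← hNs] at h
  have hprod : ∏ c, ∑ k ∈ Finset.range (m + 1), g c k * (mu ^ k / (k.factorial : ℝ))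
      ≤ ∏ c, (Real.exp mu * if c ∈ C then Real.exp (-p) else 1) := by
    refine Finset.prod_le_prod ?_ ?_
    · intro c _
      refine Finset.sum_nonneg fun k _ => mul_nonneg ?_ (by positivity)
      simp only [g]; split_ifs <;> norm_num
    · intro c _
      by_cases hc : c ∈ C
      · simp only [g, hc, if_true, ite_mul, one_mul, zero_mul]
        rw [← Finset.sum_filter]
        have h1 : ∑ k ∈ (Finset.range (m + 1)).filter (· < T), mu ^ k / (k.factorial : ℝ)
            ≤ ∑ k ∈ Finset.range T, mu ^ k / (k.factorial : ℝ) := by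
          refine Finset.sum_le_sum_of_subset_of_nonneg ?_ (fun _ _ _ => by positivity)
          intro k hk
          simp only [Finset.mem_filter, Finset.mem_range] at hk ⊢
          exact hk.2
        have h2 := Real.sum_le_exp_of_nonneg hmu0.le (T + 1)
        rw [Finset.sum_range_succ] at h2
        have h3 : mu ^ T / (T.factorial : ℝ) = Real.exp mu * p := by
          rw [hp, Real.exp_neg]; field_simp
        have h4 := Real.add_one_le_exp (-p)
        have h5 := mul_le_mul_of_nonneg_left h4 (Real.exp_pos mu).le
        rw [h3] at h2
        linarith
      · simp only [g, hc, if_false, one_mul, mul_one]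
        exact Real.sum_le_exp_of_nonneg hmu0.le (m + 1)
  have hprod2 : ∏ c : α, (Real.exp mu * if c ∈ C then Real.exp (-p) else 1)
      = Real.exp m * Real.exp (-p * C.card) := by
    rw [Finset.prod_mul_distrib, Finset.prod_const, Finset.prod_ite_mem, Finset.univ_inter,
      Finset.prod_const, ← Real.exp_nat_mul, ← Real.exp_nat_mul, Finset.card_univ, ← hmu]
    ring_nf
  rw [hprod2] at hprod
  have hs := aux_stir m hm
  have hmu_pos : 0 < mu ^ m := by positivity
  have h6 : mu ^ m * (N : ℝ) ≤ mu ^ m * ((Fintype.card α : ℝ) ^ m * (Real.exp 1 * m *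
        Real.exp (-p * C.card))) := by
    calc mu ^ m * (N : ℝ) ≤ m.factorial * (Real.exp m * Real.exp (-p * C.card)) :=
          h.trans (by gcongr)
      _ = (m.factorial * Real.exp m) * Real.exp (-p * C.card) := by ring
      _ ≤ (Real.exp 1 * m * (m : ℝ) ^ m) * Real.exp (-p * C.card) := by gcongr
      _ = (Real.exp 1 * m * (mu * Fintype.card α : ℝ) ^ m) * Real.exp (-p * C.card) := by rw [hmu]
      _ = _ := by rw [mul_pow]; ring
  exact le_of_mul_le_mul_left h6 hmu_pos

lemma aux_Emax (m n : ℕ) (hn : 1 ≤ n) :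
    EmaxAssign m n = (∑ ω : Fin m → Fin n × Fin n, maxAssign ω) / ((n : ℝ) ^ 2) ^ m := by
  have hn0 : (n : ENNReal) ≠ 0 := by exact_mod_cast (by omega : n ≠ 0)
  have hfin : IsFiniteMeasure (cellMeasure n) := by
    constructor
    simp only [cellMeasure, Measure.smul_apply, smul_eq_mul]
    refine ENNReal.mul_lt_top ?_ ?_
    · rw [ENNReal.inv_lt_top]; exact pos_iff_ne_zero.2 (pow_ne_zero 2 hn0)
    · exact measure_lt_top _ _
  have hfin2 : IsFiniteMeasure (gridMeasure m n) := by unfold gridMeasure; infer_instance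
  unfold EmaxAssign
  rw [integral_fintype (Integrable.of_finite), Finset.sum_div]
  refine Finset.sum_congr rfl fun ω _ => ?_
  have : (gridMeasure m n).real {ω} = (((n : ℝ) ^ 2) ^ m)⁻¹ := by
    rw [measureReal_def, gridMeasure, Measure.pi_singleton]
    simp [cellMeasure]
  rw [this, smul_eq_mul]
  ring

lemma aux_assign {m n : ℕ} (σ : Equiv.Perm (Fin n)) (ω : Fin m → Fin n × Fin n) :
    assignSum σ ω = ∑ k, if σ (ω k).1 = (ω k).2 then (1 : ℝ) else 0 := by
  unfold assignSum cellCount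
  simp_rw [Finset.card_filter]
  push_cast
  rw [Finset.sum_comm]
  refine Finset.sum_congr rfl fun k _ => ?_
  rw [Finset.sum_eq_single (ω k).1]
  · simp [Prod.ext_iff, eq_comm]
  · intro i _ hi
    rw [if_neg]
    intro h
    exact hi (by rw [h])
  · simp

lemma aux_max_le {m n : ℕ} (σ : Equiv.Perm (Fin n)) (ω : Fin m → Fin n × Fin n) :
    assignSum σ ω ≤ maxAssign ω := le_ciSup (f := fun σ => assignSum σ ω) (Set.finite_range _).bddAbove σ

lemma aux_max_eq {m n : ℕ} (ω : Fin m → Fin n × Fin n) :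
    ∃ σ, maxAssign ω = assignSum σ ω := by
  obtain ⟨σ, hσ⟩ := exists_eq_ciSup_of_finite (f := fun σ : Equiv.Perm (Fin n) => assignSum σ ω)
  exact ⟨σ, hσ.symm⟩

lemma aux_max_nonneg {m n : ℕ} (ω : Fin m → Fin n × Fin n) : 0 ≤ maxAssign ω := by
  refine le_trans ?_ (aux_max_le 1 ω)
  unfold assignSum
  positivity

lemma aux_mgf (m n : ℕ) (hn : 1 ≤ n) (t : ℝ) (σ : Equiv.Perm (Fin n)) :
    ∑ ω : Fin m → Fin n × Fin n, Real.exp (t * assignSum σ ω)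
      ≤ ((n : ℝ) ^ 2) ^ m * Real.exp (m * (Real.exp t - 1) / n) := by
  have h1 : ∀ ω : Fin m → Fin n × Fin n, Real.exp (t * assignSum σ ω)
      = ∏ k, (if σ (ω k).1 = (ω k).2 then Real.exp t else 1) := by
    intro ω
    rw [aux_assign, Finset.mul_sum, Real.exp_sum]
    refine Finset.prod_congr rfl fun k _ => ?_
    split_ifs <;> simp
  simp_rw [h1]
  rw [← Fintype.sum_pow (fun x : Fin n × Fin n => if σ x.1 = x.2 then Real.exp t else 1) m]
  have h2 : ∑ x : Fin n × Fin n, (if σ x.1 = x.2 then Real.exp t else 1)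
      = (n : ℝ) ^ 2 * (1 + (Real.exp t - 1) / n) := by
    have : ∀ x : Fin n × Fin n, (if σ x.1 = x.2 then Real.exp t else 1)
      = 1 + (if σ x.1 = x.2 then Real.exp t - 1 else 0) := by
      intro x; split_ifs <;> ring
    simp_rw [this]
    rw [Finset.sum_add_distrib, Fintype.sum_prod_type
      (f := fun x : Fin n × Fin n => if σ x.1 = x.2 then Real.exp t - 1 else 0)]
    simp
    have : (n : ℝ) ≠ 0 := by exact_mod_cast (by omega : n ≠ 0)
    field_simp
  rw [h2, mul_pow]
  have hn1 : (1 : ℝ) ≤ n := by exact_mod_cast hn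
  have h3 : (0 : ℝ) ≤ 1 + (Real.exp t - 1) / n := by
    have : 1 + (Real.exp t - 1) / n = ((n - 1) + Real.exp t) / n := by field_simp; ring
    rw [this]
    exact div_nonneg (by have := Real.exp_pos t; linarith) (by linarith)
  have h4 : 1 + (Real.exp t - 1) / n ≤ Real.exp ((Real.exp t - 1) / n) := by
    rw [add_comm]; exact Real.add_one_le_exp _
  have h5 := pow_le_pow_left₀ h3 h4 m
  rw [← Real.exp_nat_mul] at h5
  rw [mul_div_assoc]
  gcongr

lemma aux_upper (m n : ℕ) (hn : 1 ≤ n) (t : ℝ) (ht : 0 < t) :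
    EmaxAssign m n ≤ (n * Real.log n + m * (Real.exp t - 1) / n) / t := by
  have hn1 : (1 : ℝ) ≤ n := by exact_mod_cast hn
  set Q := n * Real.log n + m * (Real.exp t - 1) / n with hQ
  set N : ℝ := ((n : ℝ) ^ 2) ^ m with hN
  have hN0 : 0 < N := by positivity
  have h1 : ∑ ω : Fin m → Fin n × Fin n, Real.exp (t * maxAssign ω) ≤ N * Real.exp Q := by
    calc ∑ ω : Fin m → Fin n × Fin n, Real.exp (t * maxAssign ω)
        ≤ ∑ ω : Fin m → Fin n × Fin n, ∑ σ, Real.exp (t * assignSum σ ω) := by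
          refine Finset.sum_le_sum fun ω _ => ?_
          obtain ⟨σ, hσ⟩ := aux_max_eq ω
          rw [hσ]
          exact Finset.single_le_sum (f := fun σ => Real.exp (t * assignSum σ ω))
            (fun _ _ => (Real.exp_pos _).le) (Finset.mem_univ σ)
      _ = ∑ σ, ∑ ω : Fin m → Fin n × Fin n, Real.exp (t * assignSum σ ω) := Finset.sum_comm
      _ ≤ ∑ σ : Equiv.Perm (Fin n), N * Real.exp (m * (Real.exp t - 1) / n) :=
          Finset.sum_le_sum fun σ _ => aux_mgf m n hn t σ
      _ = n.factorial * (N * Real.exp (m * (Real.exp t - 1) / n)) := by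
          rw [Finset.sum_const, Finset.card_univ, Fintype.card_perm, Fintype.card_fin, nsmul_eq_mul]
      _ ≤ (n : ℝ) ^ n * (N * Real.exp (m * (Real.exp t - 1) / n)) := by
          gcongr
          exact_mod_cast Nat.factorial_le_pow n
      _ = N * Real.exp Q := by
          rw [hQ, Real.exp_add, Real.exp_nat_mul, Real.exp_log (by linarith)]
          ring
  have hcard : ∑ ω : Fin m → Fin n × Fin n, (1 : ℝ) = N := by
    simp [hN]; ring
  have h2 : ∑ ω : Fin m → Fin n × Fin n, (1 + (t * maxAssign ω - Q)) ≤ N := by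
    calc ∑ ω : Fin m → Fin n × Fin n, (1 + (t * maxAssign ω - Q))
        ≤ ∑ ω : Fin m → Fin n × Fin n, Real.exp (t * maxAssign ω) * Real.exp (-Q) := by
          refine Finset.sum_le_sum fun ω _ => ?_
          rw [← Real.exp_add, add_comm]
          exact Real.add_one_le_exp _
      _ ≤ N * Real.exp Q * Real.exp (-Q) := by
          rw [← Finset.sum_mul]; gcongr
      _ = N := by rw [mul_assoc, ← Real.exp_add]; simp
  rw [Finset.sum_add_distrib, Finset.sum_sub_distrib, hcard, ← Finset.mul_sum] at h2
  have hQs : ∑ ω : Fin m → Fin n × Fin n, Q = N * Q := by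
    rw [← hcard, Finset.sum_mul]; simp
  rw [hQs] at h2
  rw [aux_Emax m n hn, div_le_div_iff₀ hN0 ht]
  linarith

lemma aux_det {m n : ℕ} (T : ℕ) (κ : ℝ) (ω : Fin m → Fin n × Fin n)
    (hω : ∀ A B : Finset (Fin n), κ ≤ A.card → κ ≤ B.card →
      ∃ i ∈ A, ∃ j ∈ B, T ≤ cellCount i j ω) : (n - κ) * T ≤ maxAssign ω := by
  classical
  obtain ⟨σ, hσ⟩ := aux_swap (fun i j => T ≤ cellCount i j ω)
  let A : Finset (Fin n) := Finset.univ.filter fun i => ¬ T ≤ cellCount i (σ i) ω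
  have hA : (A.card : ℝ) < κ := by
    by_contra hcon
    push Not at hcon
    obtain ⟨i, hi, j, hj, hij⟩ := hω A (A.map σ.toEmbedding) hcon (by rw [Finset.card_map]; exact hcon)
    rw [Finset.mem_map] at hj
    obtain ⟨i', hi', rfl⟩ := hj
    simp only [A, Finset.mem_filter, Finset.mem_univ, true_and] at hi hi'
    exact hσ i i' hi hi' hij
  refine le_trans ?_ (aux_max_le σ ω)
  have h1 : ∑ i ∈ Aᶜ, (T : ℝ) ≤ assignSum σ ω := by
    unfold assignSum
    refine le_trans (Finset.sum_le_sum (g := fun i => (cellCount i (σ i) ω : ℝ)) ?_)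
      (Finset.sum_le_sum_of_subset_of_nonneg (Finset.subset_univ _) (fun _ _ _ => by positivity))
    intro i hi
    simp only [A, Finset.mem_compl, Finset.mem_filter, Finset.mem_univ, true_and, not_not] at hi
    exact_mod_cast hi
  refine le_trans ?_ h1
  rw [Finset.sum_const, nsmul_eq_mul]
  have : ((Aᶜ.card : ℕ) : ℝ) = n - A.card := by
    rw [Finset.card_compl, Nat.cast_sub (Finset.card_le_univ A), Fintype.card_fin]
  rw [this]
  gcongr

lemma aux_lower (m n T : ℕ) (hn : 1 ≤ n) (hm : 1 ≤ m) (κ : ℝ) (hκ : 0 ≤ κ) (hκn : κ ≤ n) :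
    (n - κ) * T * (1 - 4 ^ n * (Real.exp 1 * m *
        Real.exp (-(Real.exp (-((m : ℝ) / n ^ 2)) * ((m : ℝ) / n ^ 2) ^ T / T.factorial) * κ ^ 2)))
      ≤ EmaxAssign m n := by
  classical
  have hn0 : (0 : ℝ) < n := by exact_mod_cast hn
  have hm0 : (0 : ℝ) < m := by exact_mod_cast hm
  set mu : ℝ := (m : ℝ) / n ^ 2 with hmu
  have hmu0 : 0 < mu := by positivity
  set p := Real.exp (-mu) * mu ^ T / T.factorial with hp
  have hp0 : 0 < p := by positivity
  set N : ℝ := ((n : ℝ) ^ 2) ^ m with hN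
  have hN0 : 0 < N := by positivity
  set E := Real.exp 1 * m * Real.exp (-p * κ ^ 2) with hE
  have hcardα : (Fintype.card (Fin n × Fin n) : ℝ) = n ^ 2 := by simp; ring
  let Bad : Finset (Fin n) × Finset (Fin n) → Finset (Fin m → Fin n × Fin n) := fun AB =>
    Finset.univ.filter fun ω => ∀ c ∈ AB.1 ×ˢ AB.2, (Finset.univ.filter fun k => ω k = c).card < T
  let P : Finset (Finset (Fin n) × Finset (Fin n)) :=
    Finset.univ.filter fun AB => κ ≤ AB.1.card ∧ κ ≤ AB.2.card
  let W := P.biUnion Bad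
  have hBad : ∀ AB ∈ P, ((Bad AB).card : ℝ) ≤ N * E := by
    intro AB hAB
    simp only [P, Finset.mem_filter, Finset.mem_univ, true_and] at hAB
    have := aux_count (α := Fin n × Fin n) m T hm (AB.1 ×ˢ AB.2) mu
      (by rw [hcardα, hmu]; field_simp) hmu0
    rw [hcardα] at this
    refine this.trans ?_
    rw [hE]
    have hk : κ ^ 2 ≤ ((AB.1 ×ˢ AB.2).card : ℝ) := by
      rw [Finset.card_product]; push_cast
      rw [pow_two]; exact mul_le_mul hAB.1 hAB.2 hκ (by positivity)
    have hk2 : -p * ((AB.1 ×ˢ AB.2).card : ℝ) ≤ -p * κ ^ 2 := by nlinarith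
    gcongr
  have hW : (W.card : ℝ) ≤ 4 ^ n * (N * E) := by
    have h1 : (W.card : ℝ) ≤ ∑ AB ∈ P, ((Bad AB).card : ℝ) := by
      exact_mod_cast Finset.card_biUnion_le
    refine h1.trans ((Finset.sum_le_sum hBad).trans ?_)
    rw [Finset.sum_const, nsmul_eq_mul]
    have hNE : 0 ≤ N * E := by positivity
    refine mul_le_mul_of_nonneg_right ?_ hNE
    have h2 : P.card ≤ 4 ^ n := by
      refine (Finset.card_le_univ P).trans (le_of_eq ?_)
      rw [Fintype.card_prod, Fintype.card_finset, Fintype.card_fin, ← mul_pow]; norm_num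
    exact_mod_cast h2
  have hgood : ∀ ω ∈ Wᶜ, (n - κ) * T ≤ maxAssign ω := by
    intro ω hω
    refine aux_det T κ ω fun A B hA hB => ?_
    by_contra hcon
    push Not at hcon
    rw [Finset.mem_compl] at hω
    apply hω
    refine Finset.mem_biUnion.2 ⟨(A, B), ?_, ?_⟩
    · simp [P, hA, hB]
    · simp only [Bad, Finset.mem_filter, Finset.mem_univ, true_and]
      intro c hc
      rw [Finset.mem_product] at hc
      exact hcon c.1 hc.1 c.2 hc.2
  have hWc : ((Wᶜ.card : ℕ) : ℝ) = N - W.card := by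
    rw [Finset.card_compl, Nat.cast_sub (Finset.card_le_univ W)]
    congr 1
    rw [Fintype.card_fun, Fintype.card_fin]; push_cast; rw [hcardα]
  rw [aux_Emax m n hn, le_div_iff₀ hN0]
  have hK : 0 ≤ (n - κ) * (T : ℝ) := mul_nonneg (by linarith) (by positivity)
  calc (n - κ) * T * (1 - 4 ^ n * E) * N = (N - 4 ^ n * (N * E)) * ((n - κ) * T) := by ring
    _ ≤ (N - W.card) * ((n - κ) * T) := by gcongr
    _ = ∑ ω ∈ Wᶜ, (n - κ) * (T : ℝ) := by rw [Finset.sum_const, nsmul_eq_mul, hWc]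
    _ ≤ ∑ ω ∈ Wᶜ, maxAssign ω := Finset.sum_le_sum hgood
    _ ≤ ∑ ω, maxAssign ω :=
      Finset.sum_le_sum_of_subset_of_nonneg (Finset.subset_univ _) (fun ω _ _ => aux_max_nonneg ω)

lemma aux_plow (mu : ℝ) (hmu : 0 < mu) (T : ℕ) (hT : 1 ≤ T) :
    Real.exp (-mu + T - T * Real.log (T / mu) - 1 - Real.log T)
      ≤ Real.exp (-mu) * mu ^ T / T.factorial := by
  have hT0 : (0 : ℝ) < T := by exact_mod_cast hT
  have hs := aux_stir T hT
  have hf : (0 : ℝ) < T.factorial := by exact_mod_cast T.factorial_pos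
  rw [le_div_iff₀ hf]
  have e1 : Real.exp (-mu + T - T * Real.log (T / mu) - 1 - Real.log T)
      = Real.exp (-mu) * Real.exp T * (mu / T) ^ T / (Real.exp 1 * T) := by
    have : (mu / T) ^ T = Real.exp (-(T * Real.log (T / mu))) := by
      rw [← mul_neg, ← Real.log_inv, inv_div, Real.exp_nat_mul, Real.exp_log (by positivity)]
    rw [this, eq_div_iff (by positivity)]
    have e2 : Real.exp 1 * (T : ℝ) = Real.exp (1 + Real.log T) := by
      rw [Real.exp_add, Real.exp_log hT0]
    rw [e2]
    simp only [← Real.exp_add]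
    congr 1
    ring
  rw [e1, div_mul_eq_mul_div, div_le_iff₀ (by positivity), div_pow]
  calc Real.exp (-mu) * Real.exp T * (mu ^ T / (T : ℝ) ^ T) * T.factorial
      = Real.exp (-mu) * mu ^ T / (T : ℝ) ^ T * (T.factorial * Real.exp T) := by ring
    _ ≤ Real.exp (-mu) * mu ^ T / (T : ℝ) ^ T * (Real.exp 1 * T * (T : ℝ) ^ T) := by gcongr
    _ = _ := by field_simp

lemma aux_phi (H' H : ℝ) (h1 : 1 < H') (h2 : H' < H) :
    H' * Real.log H' - (H' - 1) < H * Real.log H - (H - 1) := by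
  have hp1 : 0 < H' := by linarith
  have hp2 : 0 < H := by linarith
  have hl := Real.one_sub_inv_le_log_of_pos (x := H / H') (by positivity)
  rw [Real.log_div hp2.ne' hp1.ne', inv_div] at hl
  have h3 := mul_le_mul_of_nonneg_left hl (by linarith : 0 ≤ H)
  have h4 : H * (1 - H' / H) = H - H' := by
    have : H ≠ 0 := by linarith
    field_simp
  have h5 : 0 < Real.log H' := Real.log_pos h1
  nlinarith

lemma aux_lower_asymp (m : ℕ → ℕ) (hm : ∀ n, 0 < m n) (c : ℝ) (hc : 0 < c)
    (h : Tendsto (fun n : ℕ => ((m n : ℝ) / (n : ℝ) ^ 2) / Real.log n) atTop (nhds c))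
    (Hstar : ℝ) (hHeq : Hstar * Real.log Hstar - (Hstar - 1) = 1 / c)
    (H' : ℝ) (h1 : 1 < H') (h2 : H' < Hstar) (ε : ℝ) (hε : 0 < ε) (hε1 : ε < 1) :
    ∀ᶠ n : ℕ in atTop, (1 - ε) ^ 2 * (H' / Hstar)
      ≤ EmaxAssign (m n) n / (c * Hstar * (n : ℝ) * Real.log n) := by
  have hL : Tendsto (fun n : ℕ => Real.log (n : ℝ)) atTop atTop :=
    Real.tendsto_log_atTop.comp tendsto_natCast_atTop_atTop
  have ha : 0 < c * H' := by positivity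
  let T : ℕ → ℕ := fun n => ⌈c * H' * Real.log n⌉₊
  let mu : ℕ → ℝ := fun n => (m n : ℝ) / (n : ℝ) ^ 2
  have hTL : Tendsto (fun n : ℕ => (T n : ℝ) / Real.log n) atTop (nhds (c * H')) :=
    (tendsto_nat_ceil_mul_div_atTop ha.le).comp hL
  have hTtop : Tendsto (fun n : ℕ => (T n : ℝ)) atTop atTop := by
    refine tendsto_atTop_mono (fun n => Nat.le_ceil _) (Tendsto.const_mul_atTop ha hL)
  have hTmu : Tendsto (fun n : ℕ => (T n : ℝ) / mu n) atTop (nhds H') := by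
    have := hTL.div h hc.ne'
    rw [mul_div_assoc, mul_div_cancel₀ _ hc.ne'] at this
    refine this.congr' ?_
    filter_upwards [hL.eventually_gt_atTop 0] with n hn
    simp only [Pi.div_apply, mu]
    rw [div_div_div_cancel_right₀ hn.ne']
  have hlogT : Tendsto (fun n : ℕ => Real.log (T n) / Real.log n) atTop (nhds 0) := by
    have hz : Tendsto (fun x : ℝ => Real.log x / x) atTop (nhds 0) :=
      Real.isLittleO_log_id_atTop.tendsto_div_nhds_zero
    have := (hz.comp hTtop).mul hTL
    rw [zero_mul] at this
    refine this.congr' ?_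
    filter_upwards [hTtop.eventually_gt_atTop 0] with n hn
    simp only [Function.comp]
    field_simp
  have hF : Tendsto (fun n : ℕ =>
      (-mu n + T n - T n * Real.log (T n / mu n) - 1 - Real.log (T n)) / Real.log n) atTop
      (nhds (-c + c * H' - c * H' * Real.log H' - 0 - 0)) := by
    have h10 : Tendsto (fun n : ℕ => 1 / Real.log (n : ℝ)) atTop (nhds 0) := by
      simp only [one_div]; exact hL.inv_tendsto_atTop
    have := (((h.neg.add hTL).sub (hTL.mul (hTmu.log (by linarith)))).sub h10).sub hlogT
    refine this.congr fun n => ?_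
    simp only [mu]
    ring
  obtain ⟨δ, hδ, hδ2⟩ : ∃ δ > 0, -1 + δ < -c + c * H' - c * H' * Real.log H' - 0 - 0 := by
    have := aux_phi H' Hstar h1 h2
    rw [hHeq] at this
    have h3 := mul_lt_mul_of_pos_left this hc
    rw [mul_one_div_cancel hc.ne'] at h3
    refine ⟨(1 - c * (H' * Real.log H' - (H' - 1))) / 2, by linarith, by nlinarith⟩
  have hexp : Tendsto (fun n : ℕ => Real.exp (δ * Real.log n)) atTop atTop :=
    Real.tendsto_exp_atTop.comp (Tendsto.const_mul_atTop hδ hL)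
  have hnat : Tendsto (fun n : ℕ => (n : ℝ)) atTop atTop := tendsto_natCast_atTop_atTop
  filter_upwards [hF.eventually_const_lt hδ2, hexp.eventually_ge_atTop (9 / ε ^ 2),
    hnat.eventually_ge_atTop (c + 1), hnat.eventually_ge_atTop (-Real.log ε),
    h.eventually_lt_const (show c < c + 1 by linarith), hL.eventually_gt_atTop 0,
    hTtop.eventually_ge_atTop 1, eventually_ge_atTop 1] with n hFn hEn hnc hnε hmn hLn hTn hn
  have hn0 : (0 : ℝ) < n := by exact_mod_cast hn
  have hn1 : (1 : ℝ) ≤ n := by exact_mod_cast hn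
  have hm0 : (0 : ℝ) < m n := by exact_mod_cast hm n
  have hT1 : 1 ≤ T n := by exact_mod_cast hTn
  have hmu0 : 0 < mu n := by simp only [mu]; positivity
  have hp := aux_plow (mu n) hmu0 (T n) hT1
  set p := Real.exp (-mu n) * mu n ^ T n / (T n).factorial with hpdef
  have hLle : Real.log n ≤ n := (Real.log_le_sub_one_of_pos hn0).trans (by linarith)
  have hp2 : Real.exp ((-1 + δ) * Real.log n) ≤ p := by
    refine le_trans (Real.exp_le_exp.2 ?_) hp
    rw [lt_div_iff₀ hLn] at hFn
    exact hFn.le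
  have hp3 : 9 * n ≤ p * (ε * n) ^ 2 := by
    have e1 : Real.exp ((-1 + δ) * Real.log n) = Real.exp (δ * Real.log n) / n := by
      rw [eq_div_iff hn0.ne']
      nth_rewrite 2 [← Real.exp_log hn0]
      rw [← Real.exp_add]; ring_nf
    rw [e1, div_le_iff₀ hn0] at hp2
    have hEn2 := hEn.trans hp2
    rw [div_le_iff₀ (by positivity)] at hEn2
    calc 9 * (n : ℝ) ≤ p * n * ε ^ 2 * n := by gcongr
      _ = _ := by ring
  have hm4 : (m n : ℝ) ≤ Real.exp (4 * n) := by
    have e0 : (m n : ℝ) ≤ n ^ 4 := by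
      rw [div_lt_iff₀ hLn, div_lt_iff₀ (by positivity)] at hmn
      calc (m n : ℝ) ≤ (c + 1) * Real.log n * n ^ 2 := hmn.le
        _ ≤ n * n * n ^ 2 := by gcongr
        _ = _ := by ring
    refine e0.trans ?_
    have : (n : ℝ) ^ 4 = Real.exp (4 * Real.log n) := by
      rw [← Real.exp_log (pow_pos hn0 4), Real.log_pow]; norm_num
    rw [this]
    exact Real.exp_le_exp.2 (by linarith)
  have h4 : (4 : ℝ) ^ n ≤ Real.exp (3 * n) := by
    have : (4 : ℝ) ≤ Real.exp 3 := by
      have := Real.add_one_le_exp (3 : ℝ); linarith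
    rw [mul_comm, Real.exp_nat_mul]
    gcongr
  have hsmall : 4 ^ n * (Real.exp 1 * m n * Real.exp (-p * (ε * n) ^ 2)) ≤ ε := by
    calc 4 ^ n * (Real.exp 1 * m n * Real.exp (-p * (ε * n) ^ 2))
        ≤ Real.exp (3 * n) * (Real.exp n * Real.exp (4 * n) * Real.exp (-(9 * n))) := by
          gcongr
          linarith
      _ = Real.exp (-n) := by
          simp only [← Real.exp_add]; congr 1; ring
      _ ≤ Real.exp (Real.log ε) := Real.exp_le_exp.2 (by linarith)
      _ = ε := Real.exp_log hε
  have hlow := aux_lower (m n) n (T n) hn (hm n) (ε * n) (by positivity) (by nlinarith)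
  have hH0 : 0 < Hstar := by linarith
  have hTge : c * H' * Real.log n ≤ T n := Nat.le_ceil _
  rw [le_div_iff₀ (by positivity)]
  refine le_trans ?_ hlow
  have hε0 : 0 ≤ 1 - ε := by linarith
  calc (1 - ε) ^ 2 * (H' / Hstar) * (c * Hstar * n * Real.log n)
      = ((1 - ε) * n) * (c * H' * Real.log n) * (1 - ε) := by field_simp
    _ ≤ ((1 - ε) * n) * T n * (1 - ε) := by gcongr
    _ = (n - ε * n) * T n * (1 - ε) := by ring
    _ ≤ _ := by
      refine mul_le_mul_of_nonneg_left ?_ (mul_nonneg (by nlinarith) (by positivity))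
      have := hsmall
      simp only [hpdef, mu] at this
      linarith

/-- **Critical zone, maxima.**  If `m(n) n⁻² / log n → c > 0` and `H* > 1` is the unique
solution of `H log H - (H - 1) = 1/c`, then
`E[max_σ ∑ i, X_{i σ(i)}] = c H* n log n (1 + o(1))`. -/
theorem expected_max_critical (m : ℕ → ℕ) (hm : ∀ n, 0 < m n) (c : ℝ) (hc : 0 < c)
    (h : Tendsto (fun n : ℕ => ((m n : ℝ) / (n : ℝ) ^ 2) / Real.log n) atTop (nhds c))
    (Hstar : ℝ) (hHgt : 1 < Hstar)
    (hHeq : Hstar * Real.log Hstar - (Hstar - 1) = 1 / c)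
    (hHuniq : ∀ H : ℝ, 1 < H → H * Real.log H - (H - 1) = 1 / c → H = Hstar) :
    Tendsto (fun n : ℕ => EmaxAssign (m n) n / (c * Hstar * (n : ℝ) * Real.log n))
      atTop (nhds 1) := by
  have hL : Tendsto (fun n : ℕ => Real.log (n : ℝ)) atTop atTop :=
    Real.tendsto_log_atTop.comp tendsto_natCast_atTop_atTop
  have hH0 : 0 < Hstar := by linarith
  have hlogH : 0 < Real.log Hstar := Real.log_pos hHgt
  refine tendsto_order.2 ⟨fun b hb => ?_, fun b hb => ?_⟩
  · have hcont : Tendsto (fun ε : ℝ => (1 - ε) ^ 2 * ((Hstar - ε * (Hstar - 1)) / Hstar))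
        (nhdsWithin 0 (Set.Ioi 0)) (nhds 1) := by
      have : Continuous (fun ε : ℝ => (1 - ε) ^ 2 * ((Hstar - ε * (Hstar - 1)) / Hstar)) := by
        fun_prop
      have := (this.tendsto 0).mono_left (nhdsWithin_le_nhds (s := Set.Ioi 0))
      simpa [hH0.ne'] using this
    obtain ⟨ε, hεb, hε0, hε1⟩ := ((hcont.eventually_const_lt hb).and
      (Ioo_mem_nhdsGT (show (0 : ℝ) < 1 by norm_num))).exists
    have := aux_lower_asymp m hm c hc h Hstar hHeq (Hstar - ε * (Hstar - 1))
      (by nlinarith) (by nlinarith) ε hε0 hε1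
    filter_upwards [this] with n hn
    exact hεb.trans_le hn
  · have hup : Tendsto (fun n : ℕ => (1 + ((m n : ℝ) / (n : ℝ) ^ 2) / Real.log n * (Hstar - 1))
        / (Real.log Hstar * (c * Hstar))) atTop (nhds 1) := by
      have := ((h.mul_const (Hstar - 1)).const_add 1).div_const (Real.log Hstar * (c * Hstar))
      have e : (1 + c * (Hstar - 1)) / (Real.log Hstar * (c * Hstar)) = 1 := by
        rw [div_eq_one_iff_eq (by positivity)]
        rw [eq_div_iff hc.ne'] at hHeq
        linarith
      rwa [e] at this
    filter_upwards [hup.eventually_lt_const hb, hL.eventually_gt_atTop 0,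
      eventually_ge_atTop 1] with n hn hLn hn1
    have hn0 : (0 : ℝ) < n := by exact_mod_cast hn1
    refine lt_of_le_of_lt ?_ hn
    have hu := aux_upper (m n) n hn1 (Real.log Hstar) hlogH
    rw [Real.exp_log hH0] at hu
    rw [div_le_iff₀ (by positivity)]
    refine hu.trans (le_of_eq ?_)
    field_simp

end
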